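/- Let A be an n×n real matrix and λ ≠ 0 an eigenvalue of A with algebraic multiplicity k ≥ 1. Then there exists an index i such that the algebraic multiplicity of λ as an eigenvalue of DᵢA is strictly less than k, where Dᵢ is the diagonal matrix with -1 in position (i,i) and 1 elsewhere on the diagonal. -/

import Mathlib

/-!
By Jacobi's formula the derivative of the characteristic polynomial `p` of `A` is the sum of the
principal cofactors `mᵢ` of `X - A`. If `λ` is a root of `p` of multiplicity `k`, then `(X - λ) ^ k`
does not divide `p'`, so it fails to divide some `mᵢ`. Multiplying row `i` of `A` by `c` changes
`p` into `c p + (1 - c) X mᵢ`, and `X` is prime to `X - λ` because `λ ≠ 0`; hence `(X - λ) ^ k` does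
not divide the new characteristic polynomial as soon as `c ≠ 1`. The theorem is the case `c = -1`.
-/

section

open Polynomial Matrix

variable {R : Type*} [CommRing R]

lemma not_pow_rootMultiplicity_dvd_derivative [Nontrivial R] {p : R[X]} {t : R}
    (hp : (p.rootMultiplicity t : R) ∈ nonZeroDivisors R) :
    ¬ (X - C t) ^ p.rootMultiplicity t ∣ derivative p := by
  intro hdvd
  have hpos : 0 < p.rootMultiplicity t :=
    Nat.pos_of_ne_zero fun h ↦ nonZeroDivisors.ne_zero hp (by rw [h, Nat.cast_zero])
  obtain ⟨p_ne_zero, hroot⟩ := rootMultiplicity_pos'.1 hpos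
  have hmul := derivative_rootMultiplicity_of_root_of_mem_nonZeroDivisors hroot hp
  have derivative_ne_zero : derivative p ≠ 0 := by
    intro h
    have hone_lt : 1 < p.rootMultiplicity t :=
      (one_lt_rootMultiplicity_iff_isRoot p_ne_zero).2 ⟨hroot, by simp [h]⟩
    rw [h, rootMultiplicity_zero] at hmul
    lia
  have hle := (le_rootMultiplicity_iff derivative_ne_zero).2 hdvd
  lia

variable {n : Type*} [Fintype n] [DecidableEq n]

lemma derivative_det_eq_sum_updateCol (M : Matrix n n R[X]) :
    derivative M.det = ∑ j, (M.updateCol j fun i ↦ derivative (M i j)).det := by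
  simp only [det_apply', derivative_sum, derivative_intCast_mul, derivative_prod_finset]
  rw [Finset.sum_comm]
  refine Finset.sum_congr rfl fun σ _ ↦ ?_
  rw [Finset.mul_sum]
  refine Finset.sum_congr rfl fun j _ ↦ ?_
  rw [← Finset.prod_erase_mul _ _ (Finset.mem_univ j), updateCol_self]
  congr 2
  exact Finset.prod_congr rfl fun k hk ↦ (updateCol_ne (Finset.ne_of_mem_erase hk)).symm

lemma derivative_det (M : Matrix n n R[X]) :
    derivative M.det = (M.adjugate * M.map derivative).trace := by
  rw [derivative_det_eq_sum_updateCol]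
  refine Finset.sum_congr rfl fun j _ ↦ ?_
  rw [← cramer_apply, cramer_eq_adjugate_mulVec]
  rfl

lemma derivative_charpoly (A : Matrix n n R) :
    derivative A.charpoly = A.charmatrix.adjugate.trace := by
  have hmap : A.charmatrix.map derivative = 1 := by
    ext1 i j
    obtain rfl | hij := eq_or_ne i j
    · simp
    · simp [hij]
  rw [charpoly, derivative_det, hmap, mul_one]

lemma charmatrix_updateRow (A : Matrix n n R) (i : n) (v : n → R) :
    (A.updateRow i v).charmatrix =
      A.charmatrix.updateRow i (Pi.single i X - fun j ↦ C (v j)) := by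
  ext1 a b
  by_cases ha : a = i
  · subst ha
    simp [charmatrix_apply, diagonal_apply, Pi.single_apply, eq_comm]
  · simp [charmatrix_apply, ha]

lemma charpoly_updateRow_smul (A : Matrix n n R) (i : n) (c : R) :
    (A.updateRow i (c • A i)).charpoly =
      C c * A.charpoly + C (1 - c) * X * A.charmatrix.adjugate i i := by
  have hrow : (Pi.single i X - fun j ↦ C ((c • A i) j)) =
      C c • A.charmatrix i + (C (1 - c) * X) • Pi.single i 1 := by
    ext1 j
    by_cases hj : j = i
    · subst hj
      simp only [Pi.sub_apply, Pi.add_apply, Pi.smul_apply, Pi.single_eq_same, smul_eq_mul,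
        charmatrix_apply_eq, map_mul, map_sub, map_one, mul_one]
      ring
    · simp [hj, Ne.symm hj]
  rw [charpoly, charmatrix_updateRow, hrow, det_updateRow_add, det_updateRow_smul,
    det_updateRow_smul, updateRow_eq_self, ← adjugate_apply, charpoly]

lemma diagonal_ite_mul (A : Matrix n n R) (i : n) (c : R) :
    diagonal (fun j ↦ if j = i then c else 1) * A = A.updateRow i (c • A i) := by
  ext a b
  by_cases ha : a = i
  · subst ha
    simp
  · simp [ha]

lemma exists_not_pow_rootMultiplicity_dvd_adjugate_charmatrix [Nontrivial R]
    {A : Matrix n n R} {lam : R}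
    (hmul : (A.charpoly.rootMultiplicity lam : R) ∈ nonZeroDivisors R) :
    ∃ i, ¬ (X - C lam) ^ A.charpoly.rootMultiplicity lam ∣ A.charmatrix.adjugate i i := by
  by_contra! hdvd
  apply not_pow_rootMultiplicity_dvd_derivative hmul
  rw [derivative_charpoly]
  exact Finset.dvd_sum fun i _ ↦ hdvd i

variable [IsDomain R]

lemma pow_X_sub_C_dvd_of_dvd_C_mul_X_mul {a lam : R} (ha : a ≠ 0) (hlam : lam ≠ 0) {k : ℕ}
    {q : R[X]} (h : (X - C lam) ^ k ∣ C a * X * q) : (X - C lam) ^ k ∣ q := by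
  refine (prime_X_sub_C lam).pow_dvd_of_dvd_mul_left k ?_ h
  simp [dvd_iff_isRoot, ha, hlam]

lemma rootMultiplicity_charpoly_updateRow_smul_lt {A : Matrix n n R} {lam c : R} {i : n}
    (hlam : lam ≠ 0) (hc : c ≠ 1)
    (hi : ¬ (X - C lam) ^ A.charpoly.rootMultiplicity lam ∣ A.charmatrix.adjugate i i) :
    (A.updateRow i (c • A i)).charpoly.rootMultiplicity lam <
      A.charpoly.rootMultiplicity lam := by
  contrapose! hi
  have hdvd := (le_rootMultiplicity_iff (charpoly_monic _).ne_zero).1 hi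
  rw [charpoly_updateRow_smul,
    dvd_add_right ((pow_rootMultiplicity_dvd _ _).mul_left _)] at hdvd
  exact pow_X_sub_C_dvd_of_dvd_C_mul_X_mul (sub_ne_zero.2 hc.symm) hlam hdvd

theorem stmt_17_general (A : Matrix n n R) {lam : R} (hlam : lam ≠ 0)
    (hmul : (A.charpoly.rootMultiplicity lam : R) ≠ 0) :
    ∃ i, ∀ c ≠ 1,
      (diagonal (fun j ↦ if j = i then c else 1) * A).charpoly.rootMultiplicity lam <
        A.charpoly.rootMultiplicity lam := by
  obtain ⟨i, hi⟩ := exists_not_pow_rootMultiplicity_dvd_adjugate_charmatrix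
    (mem_nonZeroDivisors_of_ne_zero hmul)
  refine ⟨i, fun c hc ↦ ?_⟩
  rw [diagonal_ite_mul]
  exact rootMultiplicity_charpoly_updateRow_smul_lt hlam hc hi

end

theorem stmt_17 (n : ℕ) (A : Matrix (Fin n) (Fin n) ℝ) (lam : ℝ)
    (hlam : lam ≠ 0) (hmul : 1 ≤ (Matrix.charpoly A).rootMultiplicity lam) :
    ∃ i : Fin n,
      (Matrix.charpoly
          (Matrix.diagonal (fun j => if j = i then (-1 : ℝ) else 1) * A)).rootMultiplicity lam
        < (Matrix.charpoly A).rootMultiplicity lam := by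
  obtain ⟨i, hi⟩ := stmt_17_general A hlam (Nat.cast_ne_zero.2 (Nat.one_le_iff_ne_zero.1 hmul))
  exact ⟨i, hi (-1) (by norm_num)⟩
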